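/- Let (X,T) be a nontrivial TDS (X contains at least two points). Then the whole space X is not a mean Li-Yorke set; that is, there exist distinct x,y ∈ X such that (x,y) is not a mean Li-Yorke pair. -/

import Mathlib

open Filter Metric Set

/-- Birkhoff average of the distance between the orbits of `x` and `y`. -/
noncomputable def birkhoffAvg {X : Type*} [PseudoMetricSpace X]
    (T : X → X) (x y : X) (N : ℕ) : ℝ :=
  (∑ k ∈ Finset.range N, dist (T^[k] x) (T^[k] y)) / N

/-- A pair `(x,y)` is mean proximal if
`liminf_{N→∞} (1/N) ∑_{k<N} d(T^k x, T^k y) = 0`. -/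
def MeanProximalPair {X : Type*} [PseudoMetricSpace X] (T : X → X) (x y : X) : Prop :=
  liminf (birkhoffAvg T x y) atTop = 0

/-- A mean Li-Yorke pair: a mean proximal pair with positive upper Birkhoff
distance average. -/
def MeanLiYorkePair {X : Type*} [PseudoMetricSpace X] (T : X → X) (x y : X) : Prop :=
  MeanProximalPair T x y ∧ 0 < limsup (birkhoffAvg T x y) atTop

/-!
On a compact space, if every point has some orbit block of positive length over which the average
of an upper semicontinuous observable is below `c`, then the block lengths may be chosen bounded,
and cutting orbits into such blocks bounds all long averages, uniformly, by any number above `c`.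
Applied to the product system on `X × X` with the observable `dist`, this shows that if all pairs
are mean proximal, then all mean distances tend to zero, so no pair is mean Li-Yorke.
-/

section BirkhoffSum

variable {α : Type*} {f : α → α}

theorem birkhoffSum_le_nsmul {M : Type*} [AddCommMonoid M] [Preorder M] [AddLeftMono M]
    {g : α → M} {c : M} (hg : ∀ x, g x ≤ c) (n : ℕ) (x : α) : birkhoffSum f g n x ≤ n • c := by
  simpa only [birkhoffSum, Finset.card_range] using
    Finset.sum_le_card_nsmul (Finset.range n) (fun k ↦ g (f^[k] x)) c fun k _ ↦ hg _

theorem birkhoffSum_le_nsmul_add_nsmul {M : Type*} [AddCommMonoid M] [Preorder M]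
    [AddLeftMono M] {g : α → M} {c C : M} {L : ℕ} (hC : 0 ≤ C) (hg : ∀ x, g x ≤ c + C)
    (hL : ∀ x, ∃ N ∈ Ioc 0 L, birkhoffSum f g N x ≤ N • c) (n : ℕ) (x : α) :
    birkhoffSum f g n x ≤ n • c + L • C := by
  induction n using Nat.strong_induction_on generalizing x with
  | _ n ih =>
    obtain ⟨N, ⟨hN_pos, hN_le⟩, hN⟩ := hL x
    obtain hn | hn := lt_or_ge n N
    · calc birkhoffSum f g n x
          ≤ n • (c + C) := birkhoffSum_le_nsmul hg n x
        _ = n • c + n • C := nsmul_add c C n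
        _ ≤ n • c + L • C := by gcongr; exact hn.le.trans hN_le
    · obtain ⟨m, rfl⟩ := Nat.exists_eq_add_of_le hn
      calc birkhoffSum f g (N + m) x
          = birkhoffSum f g N x + birkhoffSum f g m (f^[N] x) := birkhoffSum_add f g N m x
        _ ≤ N • c + (m • c + L • C) := by gcongr; exact ih m (by lia) _
        _ = (N + m) • c + L • C := by rw [add_nsmul, add_assoc]

section UpperSemicontinuous

variable [TopologicalSpace α] {M : Type*} [LinearOrder M] [TopologicalSpace M] [OrderTopology M]
  {g : α → M} {c : M}

theorem upperSemicontinuous_birkhoffSum [AddCommMonoid M] [IsOrderedAddMonoid M] [ContinuousAdd M]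
    (hf : Continuous f) (hg : UpperSemicontinuous g) (n : ℕ) :
    UpperSemicontinuous (birkhoffSum f g n) :=
  upperSemicontinuous_sum fun k _ ↦ hg.comp (hf.iterate k)

theorem exists_forall_exists_mem_Ioc_birkhoffSum_le [CompactSpace α] [AddCommMonoid M]
    [IsOrderedAddMonoid M] [ContinuousAdd M] (hf : Continuous f) (hg : UpperSemicontinuous g)
    (h : ∀ x, ∃ N ≠ 0, birkhoffSum f g N x < N • c) :
    ∃ L, ∀ x, ∃ N ∈ Ioc 0 L, birkhoffSum f g N x ≤ N • c := by
  choose N hN_ne hN using h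
  obtain ⟨t, ht⟩ := isCompact_univ.elim_finite_subcover
    (fun z ↦ birkhoffSum f g (N z) ⁻¹' Iio (N z • c))
    (fun z ↦ (upperSemicontinuous_birkhoffSum hf hg (N z)).isOpen_preimage _)
    fun z _ ↦ mem_iUnion.2 ⟨z, hN z⟩
  refine ⟨t.sup N, fun x ↦ ?_⟩
  obtain ⟨z, hz, hx⟩ := mem_iUnion₂.1 (ht (mem_univ x))
  exact ⟨N z, ⟨Nat.pos_of_ne_zero (hN_ne z), Finset.le_sup hz⟩, le_of_lt hx⟩

theorem exists_birkhoffSum_le_nsmul_add [CompactSpace α] [AddCommGroup M] [IsOrderedAddMonoid M]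
    (hf : Continuous f) (hg : UpperSemicontinuous g)
    (h : ∀ x, ∃ N ≠ 0, birkhoffSum f g N x < N • c) :
    ∃ B, ∀ n x, birkhoffSum f g n x ≤ n • c + B := by
  obtain ⟨L, hL⟩ := exists_forall_exists_mem_Ioc_birkhoffSum_le hf hg h
  obtain ⟨b, hb⟩ := (hg.upperSemicontinuousOn univ).bddAbove_of_isCompact isCompact_univ
  have hg_le (x : α) : g x ≤ c + max (b - c) 0 :=
    sub_le_iff_le_add'.1 <| le_max_of_le_left <|
      sub_le_sub_right (hb (mem_image_of_mem g (mem_univ x))) c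
  exact ⟨L • max (b - c) 0, birkhoffSum_le_nsmul_add_nsmul (le_max_right _ _) hg_le hL⟩

end UpperSemicontinuous

theorem eventually_forall_birkhoffAverage_lt [TopologicalSpace α] [CompactSpace α] {g : α → ℝ}
    {c c' : ℝ} (hf : Continuous f) (hg : UpperSemicontinuous g)
    (h : ∀ x, ∃ N ≠ 0, birkhoffAverage ℝ f g N x < c) (hc : c < c') :
    ∀ᶠ n in atTop, ∀ x, birkhoffAverage ℝ f g n x < c' := by
  have hsum (x : α) : ∃ N ≠ 0, birkhoffSum f g N x < N • c := by
    obtain ⟨N, hN_ne, hN⟩ := h x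
    refine ⟨N, hN_ne, ?_⟩
    rwa [nsmul_eq_mul, ← inv_mul_lt_iff₀ (by positivity)]
  obtain ⟨B, hB⟩ := exists_birkhoffSum_le_nsmul_add hf hg hsum
  have hlim : Tendsto (fun n : ℕ ↦ c + B / n) atTop (nhds c) := by
    simpa only [add_zero] using (tendsto_const_div_atTop_nhds_zero_nat B).const_add c
  filter_upwards [hlim.eventually_lt_const hc, eventually_ne_atTop 0] with n hn hn_ne x
  calc birkhoffAverage ℝ f g n x
      ≤ (n : ℝ)⁻¹ * (n • c + B) := mul_le_mul_of_nonneg_left (hB n x) (by positivity)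
    _ = c + B / n := by rw [nsmul_eq_mul]; field_simp
    _ < c' := hn

end BirkhoffSum

section MeanProximal

variable {X : Type*} [PseudoMetricSpace X] {T : X → X}

theorem birkhoffAvg_eq_birkhoffAverage (T : X → X) (x y : X) (N : ℕ) :
    birkhoffAvg T x y N =
      birkhoffAverage ℝ (Prod.map T T) (fun p ↦ dist p.1 p.2) N (x, y) := by
  simp only [birkhoffAvg, birkhoffAverage, birkhoffSum, Prod.map_iterate, Prod.map_apply,
    smul_eq_mul, div_eq_inv_mul]

theorem birkhoffAvg_nonneg (T : X → X) (x y : X) (N : ℕ) : 0 ≤ birkhoffAvg T x y N :=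
  div_nonneg (Finset.sum_nonneg fun _ _ ↦ dist_nonneg) N.cast_nonneg

theorem meanProximalPair_self (T : X → X) (x : X) : MeanProximalPair T x x := by
  have hzero : birkhoffAvg T x x = fun _ ↦ 0 := by
    funext N
    simp only [birkhoffAvg, dist_self, Finset.sum_const_zero, zero_div]
  rw [MeanProximalPair, hzero, liminf_const]

theorem birkhoffAvg_le_diam_univ [BoundedSpace X] (T : X → X) (x y : X) (N : ℕ) :
    birkhoffAvg T x y N ≤ diam (univ : Set X) := by
  refine div_le_of_le_mul₀ N.cast_nonneg diam_nonneg ?_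
  rw [mul_comm, ← nsmul_eq_mul]
  simpa only [Finset.card_range] using Finset.sum_le_card_nsmul (Finset.range N) _ _ fun k _ ↦
    dist_le_diam_of_mem (Bornology.IsBounded.all univ) (mem_univ (T^[k] x)) (mem_univ (T^[k] y))

theorem MeanProximalPair.exists_birkhoffAvg_lt [BoundedSpace X] {x y : X}
    (h : MeanProximalPair T x y) {ε : ℝ} (hε : 0 < ε) : ∃ N ≠ 0, birkhoffAvg T x y N < ε := by
  have hfreq : ∃ᶠ N in atTop, birkhoffAvg T x y N < ε :=
    frequently_lt_of_liminf_lt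
      (isBoundedUnder_of ⟨_, birkhoffAvg_le_diam_univ T x y⟩).isCoboundedUnder_ge (h.trans_lt hε)
  obtain ⟨N, hN, hN_ne⟩ := (hfreq.and_eventually (eventually_ne_atTop 0)).exists
  exact ⟨N, hN_ne, hN⟩

theorem tendsto_birkhoffAvg_zero_of_forall_meanProximalPair [CompactSpace X] (hT : Continuous T)
    (h : ∀ x y, MeanProximalPair T x y) (x y : X) :
    Tendsto (birkhoffAvg T x y) atTop (nhds 0) := by
  refine tendsto_order.2 ⟨fun a ha ↦ .of_forall fun N ↦ ha.trans_le (birkhoffAvg_nonneg T x y N),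
    fun ε hε ↦ ?_⟩
  have hdist : UpperSemicontinuous fun p : X × X ↦ dist p.1 p.2 :=
    continuous_dist.upperSemicontinuous
  have hsmall (p : X × X) :
      ∃ N ≠ 0, birkhoffAverage ℝ (Prod.map T T) (fun p ↦ dist p.1 p.2) N p < ε / 2 := by
    simpa only [birkhoffAvg_eq_birkhoffAverage] using
      (h p.1 p.2).exists_birkhoffAvg_lt (half_pos hε)
  filter_upwards [eventually_forall_birkhoffAverage_lt (hT.prodMap hT) hdist hsmall
    (half_lt_self hε)] with N hN
  rw [birkhoffAvg_eq_birkhoffAverage]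
  exact hN (x, y)

end MeanProximal

theorem whole_space_not_meanLiYorke_set_general
    {X : Type*} [PseudoMetricSpace X] [CompactSpace X] (T : X → X) (hT : Continuous T)
    (hX : ∃ x y : X, x ≠ y) :
    ∃ x y : X, x ≠ y ∧ ¬ MeanLiYorkePair T x y := by
  by_contra! h
  obtain ⟨x, y, hxy⟩ := hX
  have hprox (u v : X) : MeanProximalPair T u v := by
    obtain rfl | huv := eq_or_ne u v
    · exact meanProximalPair_self T u
    · exact (h u v huv).1
  have hlim := tendsto_birkhoffAvg_zero_of_forall_meanProximalPair hT hprox x y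
  exact (h x y hxy).2.ne' hlim.limsup_eq

/-- In a nontrivial TDS the whole space is never a mean Li-Yorke set: there are two
distinct points which do not form a mean Li-Yorke pair. -/
theorem whole_space_not_meanLiYorke_set
    {X : Type*} [MetricSpace X] [CompactSpace X] (T : X → X) (hT : Continuous T)
    (hX : ∃ x y : X, x ≠ y) :
    ∃ x y : X, x ≠ y ∧ ¬ MeanLiYorkePair T x y :=
  whole_space_not_meanLiYorke_set_general T hT hX
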